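/- Let X and Y be n×n positive definite matrices with Tr(X) = 1, let H be an n×n contraction (H*H ≤ I), and let p > 0. Then S_H(X | Y) ≥ (1/p) Tr[H* X H · log(Y^{−p/2} X^p Y^{−p/2})] − Tr(X − Y) − log(1 + Tr(I − H H*)). -/

import Mathlib

open Matrix ComplexOrder

/-- Matrix logarithm of a (positive definite) Hermitian matrix, via functional calculus. -/
noncomputable def mlog {n : ℕ} (A : Matrix (Fin n) (Fin n) ℂ) : Matrix (Fin n) (Fin n) ℂ :=
  cfc Real.log A

/-- Matrix exponential of a Hermitian matrix, via functional calculus. -/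
noncomputable def mexp {n : ℕ} (A : Matrix (Fin n) (Fin n) ℂ) : Matrix (Fin n) (Fin n) ℂ :=
  cfc Real.exp A

/-- Real power of a (positive definite) Hermitian matrix, via functional calculus. -/
noncomputable def mpow {n : ℕ} (A : Matrix (Fin n) (Fin n) ℂ) (p : ℝ) : Matrix (Fin n) (Fin n) ℂ :=
  cfc (fun x : ℝ => x ^ p) A

/-- Deformed logarithm `log_q x = (x^(q-1) - 1)/(q-1)`. -/
noncomputable def logq (q x : ℝ) : ℝ := (x ^ (q - 1) - 1) / (q - 1)

/-- Deformed exponential `exp_q x = (1 + (q-1)x)^(1/(q-1))`, with `exp_1 = exp`. -/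
noncomputable def expq (q x : ℝ) : ℝ :=
  if q = 1 then Real.exp x else (1 + (q - 1) * x) ^ (1 / (q - 1))

/-- Deformed logarithm of a positive definite matrix, via functional calculus. -/
noncomputable def mlogq {n : ℕ} (q : ℝ) (A : Matrix (Fin n) (Fin n) ℂ) :
    Matrix (Fin n) (Fin n) ℂ :=
  cfc (logq q) A

/-- Deformed exponential of a Hermitian matrix, via functional calculus. -/
noncomputable def mexpq {m : ℕ} (q : ℝ) (A : Matrix (Fin m) (Fin m) ℂ) :
    Matrix (Fin m) (Fin m) ℂ :=
  cfc (expq q) A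

/-- Real part of the trace. -/
noncomputable def trRe {n : ℕ} (M : Matrix (Fin n) (Fin n) ℂ) : ℝ := (Matrix.trace M).re

/-- The reduced relative entropy `S_H(A | B) = Tr[A log A - H* A H log B - A + B]`. -/
noncomputable def SH {n : ℕ} (H A B : Matrix (Fin n) (Fin n) ℂ) : ℝ :=
  trRe (A * mlog A - Hᴴ * A * H * mlog B - A + B)

/-- The reduced Tsallis relative entropy
`S_{H,q}(A | B) = Tr[A^(2-q) log_q A - H* A^(2-q) H log_q B - A + B]`. -/
noncomputable def STq {n : ℕ} (H : Matrix (Fin n) (Fin n) ℂ) (q : ℝ)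
    (A B : Matrix (Fin n) (Fin n) ℂ) : ℝ :=
  trRe (mpow A (2 - q) * mlogq q A - Hᴴ * mpow A (2 - q) * H * mlogq q B - A + B)

/-- A Hermitian matrix is unitarily diagonalised with non-increasing eigenvalues, compatibly with
the functional calculus. -/
lemma exists_sorted_diagonalization {n : ℕ} {M : Matrix (Fin n) (Fin n) ℂ} (hM : M.IsHermitian) :
    ∃ (U : Matrix (Fin n) (Fin n) ℂ) (d : Fin n → ℝ), Uᴴ * U = 1 ∧ U * Uᴴ = 1 ∧ Antitone d ∧
      (M.PosDef → ∀ i, 0 < d i) ∧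
      ∀ f : ℝ → ℝ, cfc f M = U * diagonal (fun i => (f (d i) : ℂ)) * Uᴴ := by
  let σ : Equiv.Perm (Fin n) := Tuple.sort (fun i => -hM.eigenvalues i)
  let V : Matrix (Fin n) (Fin n) ℂ := hM.eigenvectorUnitary
  have hV1 : Vᴴ * V = 1 := Unitary.coe_star_mul_self hM.eigenvectorUnitary
  have hV2 : V * Vᴴ = 1 := Unitary.coe_mul_star_self hM.eigenvectorUnitary
  refine ⟨V.submatrix id σ, fun i => hM.eigenvalues (σ i), ?_, ?_, ?_, ?_, ?_⟩
  · rw [conjTranspose_submatrix, submatrix_mul _ _ _ id _ Function.bijective_id |>.symm, hV1]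
    simp
  · rw [conjTranspose_submatrix, ← submatrix_mul _ _ _ σ _ σ.bijective, hV2]
    simp
  · intro i j hij
    have := Tuple.monotone_sort (fun i => -hM.eigenvalues i) hij
    simpa [σ] using this
  · intro h i
    exact h.eigenvalues_pos _
  · intro f
    have hd : diagonal (fun i => (f (hM.eigenvalues (σ i)) : ℂ)) =
        (diagonal (fun i => (f (hM.eigenvalues i) : ℂ))).submatrix σ σ := by
      rw [submatrix_diagonal _ _ σ.injective]; rfl
    rw [hd, conjTranspose_submatrix, ← submatrix_mul _ _ _ σ _ σ.bijective,
      ← submatrix_mul _ _ _ σ _ σ.bijective, hM.cfc_eq, IsHermitian.cfc,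
      Unitary.conjStarAlgAut_apply, submatrix_id_id]
    rfl

/-- A weighted Cauchy–Binet formula, summed over all maps instead of over subsets. -/
lemma factorial_mul_det_conjTranspose_mul_diagonal_mul {n k : ℕ} (N : Matrix (Fin n) (Fin k) ℂ)
    (d : Fin n → ℂ) :
    (k.factorial : ℂ) * (Nᴴ * diagonal d * N).det =
      ∑ f : Fin k → Fin n, (∏ i, d (f i)) *
        (star (N.submatrix f id).det * (N.submatrix f id).det) := by
  have key : (Nᴴ * diagonal d * N).det = ∑ f : Fin k → Fin n, (∏ i, d (f i)) *
      (star (N.submatrix f id).det * ∏ i, N (f i) i) := by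
    have h1 : ∀ f : Fin k → Fin n, star (N.submatrix f id).det =
        ∑ σ : Equiv.Perm (Fin k), (Equiv.Perm.sign σ : ℂ) * ∏ i, star (N (f i) (σ i)) := by
      intro f
      rw [← det_conjTranspose, det_apply']
      rfl
    simp only [h1]
    simp only [det_apply', Matrix.mul_apply (N := N), mul_diagonal, conjTranspose_apply, Finset.prod_univ_sum,
      Finset.mul_sum, Finset.sum_mul, Fintype.piFinset_univ]
    rw [Finset.sum_comm]
    refine Finset.sum_congr rfl fun f _ => Finset.sum_congr rfl fun σ _ => ?_
    simp only [Finset.prod_mul_distrib]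
    ring
  have perm : ∀ τ : Equiv.Perm (Fin k), (Nᴴ * diagonal d * N).det =
      ∑ f : Fin k → Fin n, (∏ i, d (f i)) *
      (star (N.submatrix f id).det * ((Equiv.Perm.sign τ : ℂ) * ∏ i, N (f (τ i)) i)) := by
    intro τ
    rw [key, ← (Equiv.arrowCongr τ.symm (Equiv.refl (Fin n))).sum_comp]
    refine Finset.sum_congr rfl fun f _ => ?_
    have h1 : (Equiv.arrowCongr τ.symm (Equiv.refl (Fin n))) f = f ∘ τ := rfl
    have h2 : (N.submatrix (f ∘ τ) id).det = (Equiv.Perm.sign τ : ℂ) * (N.submatrix f id).det :=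
      det_permute τ (N.submatrix f id)
    rw [h1, h2]
    have h3 : ∏ i, d ((f ∘ τ) i) = ∏ i, d (f i) := Equiv.prod_comp τ (fun i => d (f i))
    rw [h3]
    simp only [star_mul', star_intCast, Function.comp_apply]
    ring
  calc (k.factorial : ℂ) * (Nᴴ * diagonal d * N).det
      = ∑ _τ : Equiv.Perm (Fin k), (Nᴴ * diagonal d * N).det := by
        simp [Fintype.card_perm]
    _ = _ := by
        rw [Finset.sum_congr rfl fun τ _ => perm τ, Finset.sum_comm]
        refine Finset.sum_congr rfl fun f _ => ?_
        rw [← Finset.mul_sum, ← Finset.mul_sum, det_apply' (N.submatrix f id)]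
        rfl

lemma prod_comp_le_prod_castLE_of_injective {n k : ℕ} (hk : k ≤ n) {d : Fin n → ℝ}
    (hd : Antitone d) (hpos : ∀ i, 0 < d i) {f : Fin k → Fin n} (hf : Function.Injective f) :
    ∏ i, d (f i) ≤ ∏ i, d (Fin.castLE hk i) := by
  classical
  let S : Finset (Fin n) := Finset.univ.image f
  have hS : S.card = k := by simp [S, Finset.card_image_of_injective _ hf]
  have h1 : ∏ i, d (f i) = ∏ i, d (S.orderEmbOfFin hS i) := by
    rw [← Finset.prod_image (s := Finset.univ) (g := f) (f := d) (fun a _ b _ h => hf h),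
      ← Finset.prod_image (s := Finset.univ) (g := S.orderEmbOfFin hS) (f := d)
        (fun a _ b _ h => (S.orderEmbOfFin hS).injective h), Finset.image_orderEmbOfFin_univ]
  rw [h1]
  refine Finset.prod_le_prod (fun i _ => (hpos _).le) fun i _ => hd ?_
  have := (S.orderEmbOfFin hS).strictMono
  rw [Fin.le_def, Fin.val_castLE]
  have hle : ∀ (m : ℕ) (hm : m < k), m ≤ (S.orderEmbOfFin hS ⟨m, hm⟩ : ℕ) := by
    intro m
    induction m with
    | zero => intro _; exact Nat.zero_le _
    | succ m ih =>
      intro hm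
      have h2 : S.orderEmbOfFin hS ⟨m, by omega⟩ < S.orderEmbOfFin hS ⟨m + 1, hm⟩ :=
        this (by simp [Fin.lt_def])
      have h3 := ih (by omega)
      rw [Fin.lt_def] at h2
      omega
  exact hle i i.2

/-- Determinants of compressions to `k` vectors are bounded by the product of the `k` largest
eigenvalues. -/
lemma det_compression_le {n k : ℕ} (hk : k ≤ n) {M U : Matrix (Fin n) (Fin n) ℂ} {d : Fin n → ℝ}
    (hU : U * Uᴴ = 1) (hd : Antitone d) (hpos : ∀ i, 0 < d i)
    (hM : M = U * diagonal (fun i => (d i : ℂ)) * Uᴴ) (N : Matrix (Fin n) (Fin k) ℂ) :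
    (Nᴴ * M * N).det.re ≤ (∏ i, d (Fin.castLE hk i)) * (Nᴴ * N).det.re := by
  have h1 : Nᴴ * M * N = (Uᴴ * N)ᴴ * diagonal (fun i => (d i : ℂ)) * (Uᴴ * N) := by
    simp [hM, conjTranspose_mul, Matrix.mul_assoc]
  have h2 : Nᴴ * N = (Uᴴ * N)ᴴ * diagonal (fun _ : Fin n => (1 : ℂ)) * (Uᴴ * N) := by
    rw [diagonal_one, Matrix.mul_one, conjTranspose_mul, conjTranspose_conjTranspose,
      Matrix.mul_assoc, ← Matrix.mul_assoc U, hU, Matrix.one_mul]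
  rw [h1, h2]
  generalize Uᴴ * N = T
  have fac : (0 : ℝ) < k.factorial := by exact_mod_cast k.factorial_pos
  have e1 := congrArg Complex.re
    (factorial_mul_det_conjTranspose_mul_diagonal_mul T (fun i => (d i : ℂ)))
  have e2 := congrArg Complex.re (factorial_mul_det_conjTranspose_mul_diagonal_mul T (fun _ => 1))
  have hre : ∀ (z : ℂ), star z * z = ((Complex.normSq z : ℝ) : ℂ) := fun z => by
    rw [Complex.normSq_eq_conj_mul_self]; rfl
  simp only [hre, ← Complex.ofReal_prod, ← Complex.ofReal_mul, ← Complex.ofReal_sum,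
    Complex.ofReal_re, ← Complex.ofReal_natCast, Complex.re_ofReal_mul, Finset.prod_const_one,
    one_mul] at e1 e2
  refine le_of_mul_le_mul_left ?_ fac
  rw [e1, mul_left_comm, e2, Finset.mul_sum]
  refine Finset.sum_le_sum fun f _ => ?_
  by_cases hf : Function.Injective f
  · exact mul_le_mul_of_nonneg_right (prod_comp_le_prod_castLE_of_injective hk hd hpos hf)
      (Complex.normSq_nonneg _)
  · simp only [Function.Injective, not_forall] at hf
    obtain ⟨i, j, hij, hne⟩ := hf
    rw [det_zero_of_row_eq hne (by ext l; simp [hij])]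
    simp

/-- The squaring step towards the log-majorisation of Araki, Lieb and Thirring. -/
lemma det_compression_le_of_sq {n k : ℕ} (hk : k ≤ n) {R Q : Matrix (Fin n) (Fin n) ℂ}
    (hR : R.PosDef) (hQ : Q.PosDef) {c : ℝ} (hc : 0 ≤ c)
    (h : ∀ N : Matrix (Fin n) (Fin k) ℂ,
      (Nᴴ * ((R * R) * (Q * Q) * (R * R)) * N).det.re ≤ c ^ 2 * (Nᴴ * N).det.re)
    (N : Matrix (Fin n) (Fin k) ℂ) :
    (Nᴴ * (R * Q * R) * N).det.re ≤ c * (Nᴴ * N).det.re := by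
  have hM : (R * Q * R).PosDef := by
    have := hQ.conjTranspose_mul_mul_same (B := R)
      (mulVec_injective_of_isUnit hR.isUnit)
    rwa [hR.isHermitian.eq] at this
  obtain ⟨U, d, hU1, hU2, hd, hpos, hcfc⟩ := exists_sorted_diagonalization hM.isHermitian
  have hdiag : R * Q * R = U * diagonal (fun i => (d i : ℂ)) * Uᴴ := by
    have := hcfc id
    exact (cfc_id ℝ _ hM.isHermitian.isSelfAdjoint).symm.trans this
  refine (det_compression_le hk hU2 hd (hpos hM) hdiag N).trans
    (mul_le_mul_of_nonneg_right ?_ (by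
      have := (posSemidef_conjTranspose_mul_self N).det_nonneg
      exact (Complex.le_def.mp this).1))
  let V : Matrix (Fin n) (Fin k) ℂ := U.submatrix id (Fin.castLE hk)
  let D : Matrix (Fin k) (Fin k) ℂ := diagonal fun i => (d (Fin.castLE hk i) : ℂ)
  have hV : Vᴴ * V = 1 := by
    have : Vᴴ * V = (Uᴴ * U).submatrix (Fin.castLE hk) (Fin.castLE hk) := by
      rw [submatrix_mul _ _ _ id _ Function.bijective_id]; rfl
    rw [this, hU1]
    exact submatrix_one _ (Fin.castLE_injective hk)
  have hMV : (R * Q * R) * V = V * D := by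
    have h1 : (R * Q * R) * U = U * diagonal (fun i => (d i : ℂ)) := by
      rw [hdiag, Matrix.mul_assoc, hU1, Matrix.mul_one]
    ext i j
    have := congrFun (congrFun h1 i) (Fin.castLE hk j)
    rw [mul_diagonal] at this
    rw [mul_diagonal]
    exact this
  have hRdet : IsUnit R.det := (isUnit_iff_isUnit_det R).mp hR.isUnit
  let T : Matrix (Fin n) (Fin k) ℂ := R⁻¹ * V
  have hRT : R * T = V := by
    simp only [T]
    rw [← Matrix.mul_assoc, mul_nonsing_inv _ hRdet, Matrix.one_mul]
  have hQT : Q * (R * R) * T = T * D := by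
    have h1 : R * (Q * (R * R) * T) = V * D := by
      rw [← hMV, ← hRT]; simp only [Matrix.mul_assoc]
    rw [← Matrix.one_mul (Q * (R * R) * T), ← nonsing_inv_mul _ hRdet, Matrix.mul_assoc, h1,
      ← Matrix.mul_assoc]
  have hTT : (Tᴴ * T).PosDef := by
    refine PosDef.conjTranspose_mul_self T (fun x y hxy => ?_)
    have h1 : (Vᴴ * R) * T = 1 := by rw [Matrix.mul_assoc, hRT, hV]
    have h2 := congrArg (fun z => (Vᴴ * R) *ᵥ z) hxy
    simpa [mulVec_mulVec, h1] using h2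
  have hT2 : Tᴴ * ((R * R) * (Q * Q) * (R * R)) * T = Dᴴ * (Tᴴ * T) * D := by
    have h1 : (T * D)ᴴ * (T * D) = Dᴴ * (Tᴴ * T) * D := by
      simp only [conjTranspose_mul, Matrix.mul_assoc]
    rw [← h1, ← hQT]
    simp only [conjTranspose_mul, hR.isHermitian.eq, hQ.isHermitian.eq, Matrix.mul_assoc]
  have hT := h T
  have hDdet : D.det = ((∏ i, d (Fin.castLE hk i) : ℝ) : ℂ) := by
    simp [D, det_diagonal]
  rw [hT2, det_mul, det_mul, det_conjTranspose, hDdet, mul_comm _ (Tᴴ * T).det, mul_assoc,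
    Complex.star_def, Complex.conj_ofReal, ← Complex.ofReal_mul, Complex.re_mul_ofReal,
    mul_comm] at hT
  have hTpos : 0 < (Tᴴ * T).det.re := (Complex.lt_def.mp hTT.det_pos).1
  have := le_of_mul_le_mul_right hT hTpos
  rw [← sq] at this
  exact le_of_sq_le_sq this hc

lemma hasDerivAt_det_of_eq_one {k : ℕ} {K : ℝ → Matrix (Fin k) (Fin k) ℂ}
    {K' : Matrix (Fin k) (Fin k) ℂ} {t₀ : ℝ} (hK0 : K t₀ = 1)
    (hK' : ∀ i j, HasDerivAt (fun t => K t i j) (K' i j) t₀) :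
    HasDerivAt (fun t => (K t).det) K'.trace t₀ := by
  have h1 : HasDerivAt (fun t => ∑ σ : Equiv.Perm (Fin k), (Equiv.Perm.sign σ : ℂ) *
      ∏ i, K t (σ i) i) (∑ σ : Equiv.Perm (Fin k), (Equiv.Perm.sign σ : ℂ) *
      ∑ i, (∏ j ∈ Finset.univ.erase i, K t₀ (σ j) j) • K' (σ i) i) t₀ :=
    HasDerivAt.fun_sum fun σ _ =>
      (HasDerivAt.fun_finsetProd fun i _ => hK' (σ i) i).const_mul _
  simp only [det_apply']
  convert h1 using 1
  rw [Finset.sum_eq_single 1]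
  · simp only [Equiv.Perm.sign_one, Equiv.Perm.one_apply, hK0, one_apply_eq,
      Finset.prod_const_one, one_smul, trace, diag]
    simp
  · intro σ _ hσ
    refine mul_eq_zero_of_right _ (Finset.sum_eq_zero fun i _ => ?_)
    have : ∃ j, j ≠ i ∧ σ j ≠ j := by
      by_contra! hcon
      refine hσ (Equiv.ext fun j => ?_)
      by_cases hj : j = i
      · subst hj
        by_contra hne
        exact hne (σ.injective (hcon (σ j) hne))
      · exact hcon j hj
    obtain ⟨j, hji, hj⟩ := this
    rw [Finset.prod_eq_zero (Finset.mem_erase.mpr ⟨hji, Finset.mem_univ j⟩)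
      (by rw [hK0, one_apply_ne hj]), zero_smul]
  · simp

/-- First order expansion at the identity of a determinant bound on compressions. -/
lemma trace_compression_deriv_le {n k : ℕ} {M : ℝ → Matrix (Fin n) (Fin n) ℂ}
    {M' : Matrix (Fin n) (Fin n) ℂ} (hM0 : M 0 = 1)
    (hM' : ∀ i j, HasDerivAt (fun t => M t i j) (M' i j) 0)
    {V : Matrix (Fin n) (Fin k) ℂ} (hV : Vᴴ * V = 1) {γ : ℝ}
    {s : ℕ → ℝ} (hs : Filter.Tendsto s Filter.atTop (nhdsWithin 0 (Set.Ioi 0)))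
    (h : ∀ j, (Vᴴ * M (s j) * V).det.re ≤ Real.exp (s j * γ)) :
    (Vᴴ * M' * V).trace.re ≤ γ := by
  have hK' : ∀ i j, HasDerivAt (fun t => (Vᴴ * M t * V) i j) ((Vᴴ * M' * V) i j) 0 := by
    intro i j
    simp only [Matrix.mul_apply]
    exact HasDerivAt.fun_sum fun l _ => (HasDerivAt.fun_sum fun m _ =>
      (hM' m l).const_mul _).mul_const _
  have hK0 : Vᴴ * M 0 * V = 1 := by rw [hM0, Matrix.mul_one, hV]
  have hdet : HasDerivAt (fun t => (Vᴴ * M t * V).det.re) (Vᴴ * M' * V).trace.re 0 :=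
    Complex.reCLM.hasFDerivAt.comp_hasDerivAt 0 (hasDerivAt_det_of_eq_one hK0 hK')
  have hexp : HasDerivAt (fun t => Real.exp (t * γ)) γ 0 := by
    simpa using ((hasDerivAt_id (0 : ℝ)).mul_const γ).exp
  have hs' := hs.mono_right (nhdsWithin_mono 0 (fun x (hx : 0 < x) => hx.ne'))
  refine le_of_tendsto_of_tendsto ((hasDerivAt_iff_tendsto_slope.mp hdet).comp hs')
    ((hasDerivAt_iff_tendsto_slope.mp hexp).comp hs') ?_
  have hspos : ∀ᶠ j in Filter.atTop, s j ∈ Set.Ioi (0 : ℝ) := hs.eventually self_mem_nhdsWithin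
  filter_upwards [hspos] with j hj
  have hj' : 0 < s j := hj
  simp only [Function.comp, slope_def_field, hK0, sub_zero, det_one, Complex.one_re, zero_mul,
    Real.exp_zero]
  gcongr
  exact h j

lemma mpow_zero {n : ℕ} {A : Matrix (Fin n) (Fin n) ℂ} (hA : A.PosDef) : mpow A 0 = 1 := by
  obtain ⟨U, d, -, hU2, -, -, hcfc⟩ := exists_sorted_diagonalization hA.isHermitian
  rw [mpow, hcfc]
  simp [hU2]

lemma mpow_one {n : ℕ} {A : Matrix (Fin n) (Fin n) ℂ} (hA : A.PosDef) : mpow A 1 = A := by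
  simp only [mpow, Real.rpow_one]
  exact cfc_id' ℝ A hA.isHermitian.isSelfAdjoint

lemma mpow_add {n : ℕ} {A : Matrix (Fin n) (Fin n) ℂ} (hA : A.PosDef) (s t : ℝ) :
    mpow A (s + t) = mpow A s * mpow A t := by
  obtain ⟨U, d, hU1, -, -, hpos, hcfc⟩ := exists_sorted_diagonalization hA.isHermitian
  have h1 : ∀ D E : Matrix (Fin n) (Fin n) ℂ, U * D * Uᴴ * (U * E * Uᴴ) = U * (D * E) * Uᴴ := by
    intro D E
    calc _ = U * D * (Uᴴ * U) * E * Uᴴ := by simp only [Matrix.mul_assoc]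
      _ = _ := by rw [hU1]; simp only [Matrix.mul_assoc, Matrix.one_mul]
  simp only [mpow, hcfc, h1, diagonal_mul_diagonal, ← Complex.ofReal_mul,
    ← Real.rpow_add (hpos hA _)]

lemma posDef_mpow {n : ℕ} {A : Matrix (Fin n) (Fin n) ℂ} (hA : A.PosDef) (s : ℝ) :
    (mpow A s).PosDef := by
  obtain ⟨U, d, hU1, hU2, -, hpos, hcfc⟩ := exists_sorted_diagonalization hA.isHermitian
  rw [mpow, hcfc]
  have hD : (diagonal fun i => ((d i ^ s : ℝ) : ℂ)).PosDef :=
    PosDef.diagonal fun i => by exact_mod_cast Real.rpow_pos_of_pos (hpos hA i) s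
  have hU : IsUnit Uᴴ := ⟨⟨Uᴴ, U, hU1, hU2⟩, rfl⟩
  have := hD.conjTranspose_mul_mul_same (B := Uᴴ) (mulVec_injective_of_isUnit hU)
  rwa [conjTranspose_conjTranspose] at this

lemma mpow_mpow {n : ℕ} {A : Matrix (Fin n) (Fin n) ℂ} (hA : A.PosDef) (s t : ℝ) :
    mpow (mpow A s) t = mpow A (s * t) := by
  have hpos : ∀ x ∈ spectrum ℝ A, 0 < x := by
    intro x hx
    rw [hA.isHermitian.spectrum_real_eq_range_eigenvalues] at hx
    obtain ⟨i, rfl⟩ := hx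
    exact hA.eigenvalues_pos i
  have hfin : (spectrum ℝ A).Finite := finite_real_spectrum
  simp only [mpow]
  rw [← cfc_comp' (fun x : ℝ => x ^ t) (fun x : ℝ => x ^ s) A
    ((hfin.image _).continuousOn _) (hfin.continuousOn _) hA.isHermitian.isSelfAdjoint]
  exact cfc_congr fun x hx => (Real.rpow_mul (hpos x hx).le s t).symm

lemma isHermitian_mlog {n : ℕ} (A : Matrix (Fin n) (Fin n) ℂ) : (mlog A).IsHermitian :=
  cfc_predicate (p := IsSelfAdjoint) Real.log A

lemma hasDerivAt_mpow_zero {n : ℕ} {A : Matrix (Fin n) (Fin n) ℂ} (hA : A.PosDef) (c : ℝ)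
    (i j : Fin n) :
    HasDerivAt (fun t : ℝ => mpow A (t * c) i j) (((c : ℂ) • mlog A) i j) 0 := by
  obtain ⟨U, d, -, -, -, hpos, hcfc⟩ := exists_sorted_diagonalization hA.isHermitian
  simp only [mpow, mlog, hcfc, Matrix.smul_apply, smul_eq_mul]
  simp only [Matrix.mul_apply (N := Uᴴ), mul_diagonal, Finset.mul_sum]
  refine HasDerivAt.fun_sum fun l _ => ?_
  have h1 : HasDerivAt (fun t : ℝ => d l ^ (t * c)) (c * Real.log (d l)) 0 := by
    have := ((hasDerivAt_id (0 : ℝ)).mul_const c).const_rpow (hpos hA l)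
    simpa [mul_comm] using this
  have h2 := (h1.ofReal_comp.const_mul (U i l)).mul_const (Uᴴ l j)
  refine h2.congr_deriv ?_
  push_cast
  ring

lemma sum_mul_nonpos_of_partial_sums_nonpos {n : ℕ} {w c : Fin n → ℝ} (hw : Antitone w)
    (hw0 : ∀ i, 0 ≤ w i)
    (hc : ∀ (k : ℕ) (hk : k ≤ n), ∑ i : Fin k, c (Fin.castLE hk i) ≤ 0) :
    ∑ i, w i * c i ≤ 0 := by
  have key : ∀ (m : ℕ) (hm : m + 1 ≤ n), ∑ i : Fin (m + 1), w (Fin.castLE hm i) *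
      c (Fin.castLE hm i) ≤ w ⟨m, hm⟩ * ∑ i : Fin (m + 1), c (Fin.castLE hm i) := by
    intro m
    induction m with
    | zero => intro hm; simp [Fin.castLE]
    | succ m ih =>
      intro hm
      have h1 := ih (by omega)
      have h2 := hc (m + 1) (by omega)
      have h3 : w ⟨m + 1, hm⟩ ≤ w ⟨m, by omega⟩ := hw (by simp [Fin.le_def])
      rw [Fin.sum_univ_castSucc, Fin.sum_univ_castSucc (n := m + 1)]
      have e : Fin.castLE hm (Fin.last (m + 1)) = ⟨m + 1, hm⟩ := rfl
      have e' : ∀ i : Fin (m + 1), Fin.castLE hm i.castSucc = Fin.castLE (by omega) i :=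
        fun _ => rfl
      simp only [e, e']
      nlinarith
  cases n with
  | zero => simp
  | succ m =>
    have h1 := key m le_rfl
    have h2 := hc (m + 1) le_rfl
    simp only [Fin.castLE_rfl, id] at h1 h2
    exact h1.trans (mul_nonpos_of_nonneg_of_nonpos (hw0 _) h2)

/-- Weak majorisation is preserved by summing exponentials. -/
lemma sum_exp_le_of_weak_majorization {n : ℕ} {a b : Fin n → ℝ} (ha : Antitone a)
    (h : ∀ (k : ℕ) (hk : k ≤ n),
      ∑ i : Fin k, a (Fin.castLE hk i) ≤ ∑ i : Fin k, b (Fin.castLE hk i)) :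
    ∑ i, Real.exp (a i) ≤ ∑ i, Real.exp (b i) := by
  have h1 : ∑ i, Real.exp (a i) * (a i - b i) ≤ 0 :=
    sum_mul_nonpos_of_partial_sums_nonpos (fun i j hij => Real.exp_le_exp.mpr (ha hij))
      (fun i => (Real.exp_pos _).le) fun k hk => by
        rw [Finset.sum_sub_distrib]; linarith [h k hk]
  have h2 : ∀ i, Real.exp (a i) - Real.exp (b i) ≤ Real.exp (a i) * (a i - b i) := fun i => by
    have h3 := Real.add_one_le_exp (b i - a i)
    have h4 : Real.exp (b i) = Real.exp (a i) * Real.exp (b i - a i) := by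
      rw [← Real.exp_add]; ring_nf
    nlinarith [Real.exp_pos (a i)]
  have h3 := Finset.sum_le_sum fun i (_ : i ∈ Finset.univ) => h2 i
  rw [Finset.sum_sub_distrib] at h3
  linarith

lemma trRe_conj_diagonal {n : ℕ} {U : Matrix (Fin n) (Fin n) ℂ} (hU : Uᴴ * U = 1)
    (d : Fin n → ℝ) : trRe (U * diagonal (fun i => (d i : ℂ)) * Uᴴ) = ∑ i, d i := by
  rw [trRe, trace_mul_comm, ← Matrix.mul_assoc, hU, Matrix.one_mul, trace_diagonal,
    ← Complex.ofReal_sum, Complex.ofReal_re]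

/-- The path `t ↦ Y^(t/2) W^(t/p) Y^(t/2)`. -/
noncomputable def goldenThompsonPath {n : ℕ} (Y W : Matrix (Fin n) (Fin n) ℂ) (p t : ℝ) :
    Matrix (Fin n) (Fin n) ℂ :=
  mpow Y (t * (1 / 2)) * mpow W (t * (1 / p)) * mpow Y (t * (1 / 2))

lemma posDef_goldenThompsonPath {n : ℕ} {Y W : Matrix (Fin n) (Fin n) ℂ} (hY : Y.PosDef)
    (hW : W.PosDef) (p t : ℝ) : (goldenThompsonPath Y W p t).PosDef := by
  have hR := posDef_mpow hY (t * (1 / 2))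
  have := (posDef_mpow hW (t * (1 / p))).conjTranspose_mul_mul_same
    (B := mpow Y (t * (1 / 2))) (mulVec_injective_of_isUnit hR.isUnit)
  rwa [hR.isHermitian.eq] at this

lemma hasDerivAt_goldenThompsonPath_zero {n : ℕ} {Y W : Matrix (Fin n) (Fin n) ℂ}
    (hY : Y.PosDef) (hW : W.PosDef) (p : ℝ) (i j : Fin n) :
    HasDerivAt (fun t => goldenThompsonPath Y W p t i j)
      ((mlog Y + ((1 / p : ℝ) : ℂ) • mlog W) i j) 0 := by
  simp only [goldenThompsonPath, Matrix.mul_apply]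
  refine (HasDerivAt.fun_sum fun l _ => (HasDerivAt.fun_sum
    fun m _ => (hasDerivAt_mpow_zero hY (1 / 2) i m).fun_mul
      (hasDerivAt_mpow_zero hW (1 / p) m l)).fun_mul
        (hasDerivAt_mpow_zero hY (1 / 2) l j)).congr_deriv ?_
  simp only [zero_mul, mpow_zero hY, mpow_zero hW, one_apply, Matrix.smul_apply, smul_eq_mul,
    Matrix.add_apply, mul_ite, ite_mul, mul_one, mul_zero, one_mul, zero_mul,
    Finset.sum_add_distrib, Finset.sum_ite_eq, Finset.sum_ite_eq', Finset.mem_univ, if_true]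
  push_cast
  ring

lemma det_compression_goldenThompsonPath_le {n k : ℕ} (hk : k ≤ n)
    {Y W : Matrix (Fin n) (Fin n) ℂ} (hY : Y.PosDef) (hW : W.PosDef) {p s γ : ℝ}
    (h : ∀ N : Matrix (Fin n) (Fin k) ℂ, (Nᴴ * goldenThompsonPath Y W p s * N).det.re ≤
      Real.exp (s * γ) * (Nᴴ * N).det.re) (j : ℕ) :
    ∀ N : Matrix (Fin n) (Fin k) ℂ, (Nᴴ * goldenThompsonPath Y W p (s / 2 ^ j) * N).det.re ≤
      Real.exp (s / 2 ^ j * γ) * (Nᴴ * N).det.re := by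
  induction j with
  | zero => simpa using h
  | succ j ih =>
    set t := s / 2 ^ (j + 1) with ht
    have h2t : s / 2 ^ j = t + t := by rw [ht, pow_succ]; field_simp; ring
    rw [h2t] at ih
    intro N
    rw [goldenThompsonPath]
    refine det_compression_le_of_sq hk (posDef_mpow hY _) (posDef_mpow hW _)
      (Real.exp_pos _).le (fun N => ?_) N
    have h3 := ih N
    rw [goldenThompsonPath, add_mul, add_mul, mpow_add hY, mpow_add hW, add_mul, Real.exp_add,
      ← sq (Real.exp _)] at h3
    exact h3

/-- The Golden–Thompson inequality in the form of Hiai and Petz. -/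
lemma trRe_mexp_mlog_add_mlog_le {n : ℕ} {Y W : Matrix (Fin n) (Fin n) ℂ} (hY : Y.PosDef)
    (hW : W.PosDef) {p : ℝ} (hp : 0 < p) :
    trRe (mexp (mlog Y + ((1 / p : ℝ) : ℂ) • mlog W)) ≤
      trRe (mpow (mpow Y (p / 2) * W * mpow Y (p / 2)) (1 / p)) := by
  let M := goldenThompsonPath Y W p
  have hMpos : ∀ t, (M t).PosDef := posDef_goldenThompsonPath hY hW p
  have hMp : M p = mpow Y (p / 2) * W * mpow Y (p / 2) := by
    have h1 : p * (1 / p) = 1 := by field_simp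
    simp only [M, goldenThompsonPath]
    rw [h1, mpow_one hW, mul_one_div]
  set L := mlog Y + ((1 / p : ℝ) : ℂ) • mlog W with hLdef
  have hL : L.IsHermitian :=
    (isHermitian_mlog Y).add ((isHermitian_mlog W).smul (by simp [IsSelfAdjoint]))
  have hM0 : M 0 = 1 := by simp [M, goldenThompsonPath, mpow_zero hY, mpow_zero hW]
  have hM' : ∀ i j, HasDerivAt (fun t => M t i j) (L i j) 0 :=
    hasDerivAt_goldenThompsonPath_zero hY hW p
  rw [← hMp]
  obtain ⟨U, d, hU1, hU2, hd, -, hcfc⟩ := exists_sorted_diagonalization hL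
  obtain ⟨S, z, hS1, hS2, hz, hzpos, hzcfc⟩ :=
    exists_sorted_diagonalization (hMpos p).isHermitian
  replace hzpos := hzpos (hMpos p)
  rw [mexp, mpow, hcfc, hzcfc, trRe_conj_diagonal hU1, trRe_conj_diagonal hS1]
  have hz' : ∀ i, z i ^ (1 / p) = Real.exp (1 / p * Real.log (z i)) := fun i => by
    rw [Real.rpow_def_of_pos (hzpos i), mul_comm]
  simp only [hz']
  refine sum_exp_le_of_weak_majorization hd fun k hk => ?_
  set γ := ∑ i : Fin k, 1 / p * Real.log (z (Fin.castLE hk i)) with hγ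
  have hbound : ∀ (j : ℕ) (N : Matrix (Fin n) (Fin k) ℂ), (Nᴴ * M (p / 2 ^ j) * N).det.re ≤
      Real.exp (p / 2 ^ j * γ) * (Nᴴ * N).det.re := by
    refine det_compression_goldenThompsonPath_le hk hY hW fun N => ?_
    have h1 := det_compression_le hk hS2 hz hzpos
      ((cfc_id ℝ _ (hMpos p).isHermitian.isSelfAdjoint).symm.trans (hzcfc id)) N
    have h2 : Real.exp (p * γ) = ∏ i : Fin k, z (Fin.castLE hk i) := by
      rw [hγ, Finset.mul_sum, Real.exp_sum]
      refine Finset.prod_congr rfl fun i _ => ?_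
      rw [← mul_assoc, mul_one_div, div_self hp.ne', one_mul, Real.exp_log (hzpos _)]
    rwa [h2]
  let V : Matrix (Fin n) (Fin k) ℂ := U.submatrix id (Fin.castLE hk)
  have hVX : ∀ A : Matrix (Fin n) (Fin n) ℂ,
      Vᴴ * A * V = (Uᴴ * A * U).submatrix (Fin.castLE hk) (Fin.castLE hk) := by
    intro A
    rw [submatrix_mul _ _ _ id _ Function.bijective_id,
      submatrix_mul _ _ _ id _ Function.bijective_id]
    rfl
  have hV : Vᴴ * V = 1 := by
    have := hVX 1
    rw [Matrix.mul_one, Matrix.mul_one, hU1] at this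
    rw [this]
    exact submatrix_one _ (Fin.castLE_injective hk)
  have hs : Filter.Tendsto (fun j : ℕ => p / 2 ^ j) Filter.atTop (nhdsWithin 0 (Set.Ioi 0)) := by
    refine tendsto_nhdsWithin_iff.mpr ⟨?_, Filter.Eventually.of_forall fun j => ?_⟩
    · exact tendsto_const_nhds.div_atTop (tendsto_pow_atTop_atTop_of_one_lt one_lt_two)
    · exact div_pos hp (by positivity)
  have hmain := trace_compression_deriv_le hM0 hM' hV (γ := γ) hs fun j => by
    simpa [hV] using hbound j V
  have hLd : Uᴴ * L * U = diagonal (fun i => (d i : ℂ)) := by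
    have : L = U * diagonal (fun i => (d i : ℂ)) * Uᴴ :=
      (cfc_id ℝ _ hL.isSelfAdjoint).symm.trans (hcfc id)
    rw [this, Matrix.mul_assoc, Matrix.mul_assoc, hU1, Matrix.mul_one, ← Matrix.mul_assoc, hU1,
      Matrix.one_mul]
  rw [hVX, hLd, submatrix_diagonal _ _ (Fin.castLE_injective hk), trace_diagonal] at hmain
  simpa using hmain

lemma mul_diagonal_mul_conjTranspose_apply_self {n : ℕ} (G : Matrix (Fin n) (Fin n) ℂ)
    (d : Fin n → ℝ) (j : Fin n) :
    (G * diagonal (fun i => (d i : ℂ)) * Gᴴ) j j =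
      ((∑ i, Complex.normSq (G j i) * d i : ℝ) : ℂ) := by
  rw [Matrix.mul_apply]
  push_cast
  refine Finset.sum_congr rfl fun i _ => ?_
  rw [mul_diagonal, conjTranspose_apply, Complex.normSq_eq_conj_mul_self, Complex.star_def]
  ring

/-- Two functional calculi are paired under the trace by nonnegative weights. -/
lemma exists_weights_trRe_cfc_mul_cfc {n : ℕ} {X K : Matrix (Fin n) (Fin n) ℂ} (hX : X.PosDef)
    (hK : K.IsHermitian) :
    ∃ (x κ : Fin n → ℝ) (w : Fin n → Fin n → ℝ), (∀ i, 0 < x i) ∧ (∀ i j, 0 ≤ w i j) ∧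
      ∀ f g : ℝ → ℝ, trRe (cfc f X * cfc g K) = ∑ i, ∑ j, w i j * (f (x i) * g (κ j)) := by
  obtain ⟨U, x, -, -, -, hpos, hcfc⟩ := exists_sorted_diagonalization hX.isHermitian
  obtain ⟨S, κ, -, -, -, -, hcfc'⟩ := exists_sorted_diagonalization hK
  refine ⟨x, κ, fun i j => Complex.normSq ((Uᴴ * S) i j), hpos hX,
    fun i j => Complex.normSq_nonneg _, fun f g => ?_⟩
  rw [hcfc, hcfc']
  have h1 : trace (U * diagonal (fun i => (f (x i) : ℂ)) * Uᴴ *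
      (S * diagonal (fun i => (g (κ i) : ℂ)) * Sᴴ)) =
      trace (diagonal (fun i => (f (x i) : ℂ)) *
        ((Uᴴ * S) * diagonal (fun i => (g (κ i) : ℂ)) * (Uᴴ * S)ᴴ)) := by
    rw [Matrix.mul_assoc U, Matrix.mul_assoc U, trace_mul_comm U]
    simp only [conjTranspose_mul, conjTranspose_conjTranspose, Matrix.mul_assoc]
  rw [trRe, h1, trace, Complex.re_sum]
  refine Finset.sum_congr rfl fun i _ => ?_
  rw [diag_apply, diagonal_mul, mul_diagonal_mul_conjTranspose_apply_self, ← Complex.ofReal_mul,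
    Complex.ofReal_re, Finset.mul_sum]
  exact Finset.sum_congr rfl fun j _ => by ring

/-- The Gibbs variational principle, with a bound `Z` on the partition function. -/
lemma trRe_mul_sub_mul_mlog_le_log {n : ℕ} {X K : Matrix (Fin n) (Fin n) ℂ} (hX : X.PosDef)
    (hTr : trRe X = 1) (hK : K.IsHermitian) {Z : ℝ} (hZ0 : 0 < Z) (hZ : trRe (mexp K) ≤ Z) :
    trRe (X * K) - trRe (X * mlog X) ≤ Real.log Z := by
  obtain ⟨x, κ, w, hx, hw, h⟩ := exists_weights_trRe_cfc_mul_cfc hX hK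
  have hXid : cfc (fun t : ℝ => t) X = X := cfc_id' ℝ X hX.isHermitian.isSelfAdjoint
  have hKid : cfc (fun t : ℝ => t) K = K := cfc_id' ℝ K hK.isSelfAdjoint
  have hX1 : cfc (fun _ : ℝ => (1 : ℝ)) X = 1 := cfc_const_one ℝ X hX.isHermitian.isSelfAdjoint
  have hK1 : cfc (fun _ : ℝ => (1 : ℝ)) K = 1 := cfc_const_one ℝ K hK.isSelfAdjoint
  have hXlog : cfc (fun t : ℝ => t * Real.log t) X = X * mlog X := by
    have hfin : (spectrum ℝ X).Finite := finite_real_spectrum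
    rw [cfc_mul (fun t : ℝ => t) Real.log X (hfin.continuousOn _) (hfin.continuousOn _), hXid, mlog]
  have e1 := h (fun t => t) (fun t => t)
  have e2 := h (fun t => t * Real.log t) (fun _ => 1)
  have e3 := h (fun t => t) (fun _ => 1)
  have e4 := h (fun _ => 1) Real.exp
  rw [hXid, hKid] at e1
  rw [hXlog, hK1, Matrix.mul_one] at e2
  rw [hXid, hK1, Matrix.mul_one, hTr] at e3
  rw [hX1, Matrix.one_mul] at e4
  have hterm : ∀ i j, w i j * (x i * κ j) - w i j * (x i * Real.log (x i) * 1) -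
      Real.log Z * (w i j * (x i * 1)) ≤
      Z⁻¹ * (w i j * (1 * Real.exp (κ j))) - w i j * (x i * 1) := by
    intro i j
    have h1 := Real.add_one_le_exp (κ j - Real.log (x i) - Real.log Z)
    rw [Real.exp_sub, Real.exp_sub, Real.exp_log (hx i), Real.exp_log hZ0] at h1
    have h2 := mul_le_mul_of_nonneg_left h1 (mul_nonneg (hw i j) (hx i).le)
    have h3 : w i j * x i * (Real.exp (κ j) / x i / Z) = Z⁻¹ * (w i j * (1 * Real.exp (κ j))) := by
      have := (hx i).ne'
      field_simp
    rw [h3] at h2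
    linarith
  have hsum := Finset.sum_le_sum fun i (_ : i ∈ Finset.univ) =>
    Finset.sum_le_sum fun j (_ : j ∈ Finset.univ) => hterm i j
  simp only [Finset.sum_sub_distrib, ← Finset.mul_sum] at hsum
  rw [← e1, ← e2, ← e3, ← e4] at hsum
  have h5 : Z⁻¹ * trRe (cfc Real.exp K) ≤ 1 := by
    rw [inv_mul_le_iff₀ hZ0, mul_one]
    exact hZ
  linarith

/-- Jensen's trace inequality for the exponential and a contraction. -/
lemma trRe_mexp_conj_le {n : ℕ} {H L : Matrix (Fin n) (Fin n) ℂ} (hL : L.IsHermitian)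
    (hH : (1 - Hᴴ * H).PosSemidef) (hH' : (1 - H * Hᴴ).PosSemidef) :
    trRe (mexp (H * L * Hᴴ)) ≤ trRe (mexp L) + trRe (1 - H * Hᴴ) := by
  have hK : (H * L * Hᴴ).IsHermitian := isHermitian_mul_mul_conjTranspose H hL
  obtain ⟨U, d, hU1, hU2, -, -, hcfc⟩ := exists_sorted_diagonalization hL
  obtain ⟨S, κ, hS1, hS2, -, -, hcfc'⟩ := exists_sorted_diagonalization hK
  have hLd : L = U * diagonal (fun i => (d i : ℂ)) * Uᴴ :=
    (cfc_id ℝ _ hL.isSelfAdjoint).symm.trans (hcfc id)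
  have hKd : H * L * Hᴴ = S * diagonal (fun i => (κ i : ℂ)) * Sᴴ :=
    (cfc_id ℝ _ hK.isSelfAdjoint).symm.trans (hcfc' id)
  rw [mexp, mexp, hcfc, hcfc', trRe_conj_diagonal hU1, trRe_conj_diagonal hS1]
  let G := Sᴴ * H * U
  have hκ : ∀ j, κ j = ∑ i, Complex.normSq (G j i) * d i := by
    intro j
    have h1 : G * diagonal (fun i => (d i : ℂ)) * Gᴴ = diagonal (fun i => (κ i : ℂ)) := by
      calc _ = Sᴴ * (H * (U * diagonal (fun i => (d i : ℂ)) * Uᴴ) * Hᴴ) * S := by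
            simp only [G, conjTranspose_mul, conjTranspose_conjTranspose, Matrix.mul_assoc]
        _ = (Sᴴ * S) * diagonal (fun i => (κ i : ℂ)) * (Sᴴ * S) := by
            rw [← hLd, hKd]; simp only [Matrix.mul_assoc]
        _ = _ := by rw [hS1, Matrix.one_mul, Matrix.mul_one]
    have h2 := mul_diagonal_mul_conjTranspose_apply_self G d j
    rw [h1, diagonal_apply_eq] at h2
    exact_mod_cast h2
  have hGG : G * Gᴴ = Sᴴ * (H * Hᴴ) * S := by
    calc _ = Sᴴ * H * (U * Uᴴ) * Hᴴ * S := by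
          simp only [G, conjTranspose_mul, conjTranspose_conjTranspose, Matrix.mul_assoc]
      _ = _ := by rw [hU2]; simp only [Matrix.mul_assoc, Matrix.one_mul]
  have hrowC : ∀ j, (1 - G * Gᴴ) j j = ((1 - ∑ i, Complex.normSq (G j i) : ℝ) : ℂ) := by
    intro j
    have h2 := mul_diagonal_mul_conjTranspose_apply_self G (fun _ => 1) j
    simp only [Complex.ofReal_one, diagonal_one, mul_one] at h2
    rw [Matrix.sub_apply, one_apply_eq, h2]
    push_cast
    rfl
  have hcolC : ∀ i, (1 - Gᴴ * G) i i = ((1 - ∑ j, Complex.normSq (G j i) : ℝ) : ℂ) := by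
    intro i
    have h2 := mul_diagonal_mul_conjTranspose_apply_self Gᴴ (fun _ => 1) i
    simp only [Complex.ofReal_one, diagonal_one, mul_one,
      conjTranspose_conjTranspose] at h2
    rw [Matrix.sub_apply, one_apply_eq, h2]
    simp
  have hrowM : 1 - G * Gᴴ = Sᴴ * (1 - H * Hᴴ) * S := by
    rw [hGG, Matrix.mul_sub, Matrix.sub_mul, Matrix.mul_one, hS1]
  have hcolM : 1 - Gᴴ * G = Uᴴ * (1 - Hᴴ * H) * U := by
    have : Gᴴ * G = Uᴴ * (Hᴴ * H) * U := by
      calc _ = Uᴴ * Hᴴ * (S * Sᴴ) * H * U := by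
            simp only [G, conjTranspose_mul, conjTranspose_conjTranspose, Matrix.mul_assoc]
        _ = _ := by rw [hS2]; simp only [Matrix.mul_assoc, Matrix.one_mul]
    rw [this, Matrix.mul_sub, Matrix.sub_mul, Matrix.mul_one, hU1]
  have hrow : ∀ j, 0 ≤ 1 - ∑ i, Complex.normSq (G j i) := by
    intro j
    have h1 := (hH'.conjTranspose_mul_mul_same S).diag_nonneg (i := j)
    rw [← hrowM, hrowC] at h1
    exact_mod_cast h1
  have hcol : ∀ i, 0 ≤ 1 - ∑ j, Complex.normSq (G j i) := by
    intro i
    have h1 := (hH.conjTranspose_mul_mul_same U).diag_nonneg (i := i)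
    rw [← hcolM, hcolC] at h1
    exact_mod_cast h1
  have htr : trRe (1 - H * Hᴴ) = ∑ j, (1 - ∑ i, Complex.normSq (G j i)) := by
    have h1 : trace (1 - H * Hᴴ) = trace (1 - G * Gᴴ) := by
      rw [hrowM, trace_mul_comm, ← Matrix.mul_assoc, hS2, Matrix.one_mul]
    rw [trRe, h1, trace, Complex.re_sum]
    exact Finset.sum_congr rfl fun j _ => by rw [diag_apply, hrowC, Complex.ofReal_re]
  have hjensen : ∀ j, Real.exp (κ j) ≤ (∑ i, Complex.normSq (G j i) * Real.exp (d i)) +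
      (1 - ∑ i, Complex.normSq (G j i)) := by
    intro j
    have hterm : ∀ i, Complex.normSq (G j i) * (Real.exp (κ j) * (d i - κ j + 1)) ≤
        Complex.normSq (G j i) * Real.exp (d i) := by
      intro i
      refine mul_le_mul_of_nonneg_left ?_ (Complex.normSq_nonneg _)
      have h1 := Real.add_one_le_exp (d i - κ j)
      have h2 : Real.exp (d i) = Real.exp (κ j) * Real.exp (d i - κ j) := by
        rw [← Real.exp_add]; ring_nf
      rw [h2]
      exact mul_le_mul_of_nonneg_left h1 (Real.exp_pos _).le
    have hsum := Finset.sum_le_sum fun i (_ : i ∈ Finset.univ) => hterm i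
    have hexpand : ∑ i, Complex.normSq (G j i) * (Real.exp (κ j) * (d i - κ j + 1)) =
        Real.exp (κ j) * (κ j + (1 - κ j) * ∑ i, Complex.normSq (G j i)) := by
      have h1 : ∀ i, Complex.normSq (G j i) * (Real.exp (κ j) * (d i - κ j + 1)) =
          Real.exp (κ j) * (Complex.normSq (G j i) * d i) +
            Real.exp (κ j) * (1 - κ j) * Complex.normSq (G j i) := fun i => by ring
      simp only [h1]
      rw [Finset.sum_add_distrib, ← Finset.mul_sum, ← Finset.mul_sum, ← hκ j]
      ring
    have hneg : Real.exp (κ j) * (1 - κ j) ≤ 1 := by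
      have h1 := Real.add_one_le_exp (-κ j)
      have h2 : Real.exp (κ j) * Real.exp (-κ j) = 1 := by rw [← Real.exp_add]; simp
      nlinarith [Real.exp_pos (κ j)]
    have := mul_le_mul_of_nonneg_right hneg (hrow j)
    rw [hexpand] at hsum
    nlinarith
  have hsum := Finset.sum_le_sum fun j (_ : j ∈ Finset.univ) => hjensen j
  rw [Finset.sum_add_distrib, ← htr, Finset.sum_comm] at hsum
  refine hsum.trans (add_le_add_left (Finset.sum_le_sum fun i _ => ?_) _)
  rw [← Finset.sum_mul]
  nlinarith [hcol i, Real.exp_pos (d i)]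

lemma posSemidef_one_sub_mul_conjTranspose {n : ℕ} {H : Matrix (Fin n) (Fin n) ℂ}
    (hH : (1 - Hᴴ * H).PosSemidef) : (1 - H * Hᴴ).PosSemidef := by
  have : Invertible (1 : Matrix (Fin n) (Fin n) ℂ) := invertibleOne
  have h1 := PosDef.fromBlocks₁₁ (A := (1 : Matrix (Fin n) (Fin n) ℂ)) H 1 PosDef.one
  have h2 := PosDef.fromBlocks₂₂ (1 : Matrix (Fin n) (Fin n) ℂ) H
    (D := (1 : Matrix (Fin n) (Fin n) ℂ)) PosDef.one
  simp only [inv_one, Matrix.mul_one] at h1 h2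
  exact h2.mp (h1.mpr hH)

/-- Lower bound for the reduced relative entropy. -/
theorem stmt3 {n : ℕ} (X Y H : Matrix (Fin n) (Fin n) ℂ)
    (hX : X.PosDef) (hY : Y.PosDef) (hTr : Matrix.trace X = 1)
    (hH : (1 - Hᴴ * H).PosSemidef) (p : ℝ) (hp : 0 < p) :
    SH H X Y ≥
      (1 / p) * trRe (Hᴴ * X * H * mlog (mpow Y (-(p / 2)) * mpow X p * mpow Y (-(p / 2))))
        - trRe (X - Y) - Real.log (1 + trRe (1 - H * Hᴴ)) := by
  have hH' := posSemidef_one_sub_mul_conjTranspose hH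
  set W := mpow Y (-(p / 2)) * mpow X p * mpow Y (-(p / 2)) with hWdef
  have hW : W.PosDef := by
    have hR := posDef_mpow hY (-(p / 2))
    have := (posDef_mpow hX p).conjTranspose_mul_mul_same
      (B := mpow Y (-(p / 2))) (mulVec_injective_of_isUnit hR.isUnit)
    rwa [hR.isHermitian.eq] at this
  have hYW : mpow Y (p / 2) * W * mpow Y (p / 2) = mpow X p := by
    have h1 : mpow Y (p / 2) * mpow Y (-(p / 2)) = 1 := by
      rw [← mpow_add hY, add_neg_cancel, mpow_zero hY]
    have h2 : mpow Y (-(p / 2)) * mpow Y (p / 2) = 1 := by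
      rw [← mpow_add hY, neg_add_cancel, mpow_zero hY]
    calc _ = (mpow Y (p / 2) * mpow Y (-(p / 2))) * mpow X p *
          (mpow Y (-(p / 2)) * mpow Y (p / 2)) := by rw [hWdef]; simp only [Matrix.mul_assoc]
      _ = _ := by rw [h1, h2, Matrix.one_mul, Matrix.mul_one]
  have hTrX : trRe X = 1 := by rw [trRe, hTr, Complex.one_re]
  have hGT := trRe_mexp_mlog_add_mlog_le hY hW hp
  rw [hYW, mpow_mpow hX, mul_one_div, div_self hp.ne', mpow_one hX, hTrX] at hGT
  set L := mlog Y + ((1 / p : ℝ) : ℂ) • mlog W with hLdef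
  have hL : L.IsHermitian :=
    (isHermitian_mlog Y).add ((isHermitian_mlog W).smul (by simp [IsSelfAdjoint]))
  have hnonneg : 0 ≤ trRe (1 - H * Hᴴ) := (Complex.le_def.mp hH'.trace_nonneg).1
  have hgibbs := trRe_mul_sub_mul_mlog_le_log hX hTrX
    (isHermitian_mul_mul_conjTranspose H hL)
    (Z := 1 + trRe (1 - H * Hᴴ)) (by linarith)
    ((trRe_mexp_conj_le hL hH hH').trans (by linarith))
  have hXK : trRe (X * (H * L * Hᴴ)) =
      trRe (Hᴴ * X * H * mlog Y) + 1 / p * trRe (Hᴴ * X * H * mlog W) := by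
    have h1 : trace (X * (H * L * Hᴴ)) = trace (Hᴴ * X * H * L) := by
      rw [← Matrix.mul_assoc, trace_mul_comm]
      simp only [Matrix.mul_assoc]
    rw [trRe, h1, hLdef, Matrix.mul_add, trace_add, Matrix.mul_smul, trace_smul, smul_eq_mul,
      Complex.add_re, Complex.re_ofReal_mul]
    rfl
  have hSH : SH H X Y = trRe (X * mlog X) - trRe (Hᴴ * X * H * mlog Y) - trRe X + trRe Y := by
    simp [SH, trRe]
  have hXY : trRe (X - Y) = trRe X - trRe Y := by simp [trRe]
  rw [hSH, hXY]
  linarith
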